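/- Let M > 0 be fixed and set Q₁ := (log x)^{M+1}. Then for all x ≥ 2 and all Q with x(log x)^{-M} ≤ Q ≤ x, ∑_{Q₁ < q ≤ Q} (1/φ(q))·log(2Q/q)·∑_{χ primitive mod q} |ψ'_K(x, χ∘N)|² ≪ x·Q·log x, where the inner sum is over primitive Dirichlet characters modulo q and the implied constant depends only on K and M. -/

import Mathlib

/-!
Setting: `K` is a number field, Galois over `ℚ`, with ring of integers `𝓞 K`.
We formalize the objects from Smith, "A generalization of the
Barban-Davenport-Halberstam Theorem to number fields".
-/

open NumberField Ideal
open scoped Classical BigOperators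

noncomputable section

/-- `𝔞` is a (positive) power of a nonzero prime ideal of `𝓞 K`. -/
def IsPrimeIdealPower {K : Type*} [Field K] [NumberField K] (𝔞 : Ideal (𝓞 K)) : Prop :=
  ∃ (𝔭 : Ideal (𝓞 K)) (m : ℕ), 𝔭.IsPrime ∧ 𝔭 ≠ ⊥ ∧ 1 ≤ m ∧ 𝔞 = 𝔭 ^ m

/-- The von Mangoldt function on ideals of `𝓞 K`: `Λ_K(𝔭^m) = log N𝔭`, and `0` otherwise.
(For `𝔞 = 𝔭^m` with `𝔭` prime, the radical of `𝔞` is `𝔭`.) -/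
def LambdaK (K : Type*) [Field K] [NumberField K] (𝔞 : Ideal (𝓞 K)) : ℝ :=
  if IsPrimeIdealPower 𝔞 then Real.log (absNorm 𝔞.radical) else 0

/-- `ψ_K(x; q, a) = ∑_{N𝔭^m ≤ x, N𝔭^m ≡ a (mod q)} log N𝔭`. -/
def psiK (K : Type*) [Field K] [NumberField K] (x : ℝ) (q : ℕ) (a : ZMod q) : ℝ :=
  ∑' 𝔞 : Ideal (𝓞 K),
    if (absNorm 𝔞 : ℝ) ≤ x ∧ ((absNorm 𝔞 : ZMod q) = a) then LambdaK K 𝔞 else 0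

/-- `G_q`: the image of `Gal(K(ζ_q)/K)` in `(ℤ/qℤ)ˣ` under restriction to `ℚ(ζ_q)` followed
by the canonical isomorphism `Gal(ℚ(ζ_q)/ℚ) ≅ (ℤ/qℤ)ˣ`; concretely, the range of the map
sending `σ ∈ Gal(K(ζ_q)/K)` to the exponent `a ∈ (ℤ/qℤ)ˣ` with `σ(ζ_q) = ζ_q^a`. -/
def Gq (K : Type*) [Field K] [NumberField K] (q : ℕ) : Subgroup (ZMod q)ˣ :=
  if h : 0 < q then
    haveI : NeZero q := ⟨h.ne'⟩
    haveI : NeZero (((⟨q, h⟩ : ℕ+) : ℕ) : K) := ⟨Nat.cast_ne_zero.mpr h.ne'⟩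
    ((IsCyclotomicExtension.zeta_spec (⟨q, h⟩ : ℕ+) K
        (CyclotomicField (⟨q, h⟩ : ℕ+) K)).autToPow K).range
  else ⊥

/-- `φ_K(q) = |G_q|`. -/
def phiK (K : Type*) [Field K] [NumberField K] (q : ℕ) : ℕ :=
  Nat.card (Gq K q)

/-- `ψ_K(x, χ∘N) = ∑_{N𝔞 ≤ x} χ(N𝔞) Λ_K(𝔞)`. -/
def psiKChi (K : Type*) [Field K] [NumberField K] (x : ℝ) {q : ℕ}
    (χ : DirichletCharacter ℂ q) : ℂ :=
  ∑' 𝔞 : Ideal (𝓞 K),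
    if (absNorm 𝔞 : ℝ) ≤ x then χ (absNorm 𝔞 : ZMod q) * (LambdaK K 𝔞 : ℂ) else 0

/-- `ψ'_K(x, χ∘N)`: equals `ψ_K(x, χ∘N) − x` when `χ` is trivial on `G_q`,
and `ψ_K(x, χ∘N)` otherwise. -/
def psiKChi' (K : Type*) [Field K] [NumberField K] (x : ℝ) {q : ℕ}
    (χ : DirichletCharacter ℂ q) : ℂ :=
  if ∀ a ∈ Gq K q, χ (a : ZMod q) = 1 then psiKChi K x χ - x else psiKChi K x χ

/-- The common residue degree `f(K/ℚ; p)` of the primes of `K` above `p`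
(well-defined when `K/ℚ` is Galois): any prime `𝔭` above `p` has `N𝔭 = p^f`. -/
def resDeg (K : Type*) [Field K] [NumberField K] (p : ℕ) : ℕ :=
  if h : ∃ 𝔭 : Ideal (𝓞 K), 𝔭.IsPrime ∧ 𝔭 ≠ ⊥ ∧ (p : 𝓞 K) ∈ 𝔭 then
    (absNorm h.choose).factorization p
  else 0

/-- `D_K(n)`: the number of prime ideal powers `𝔭^m` of `𝓞 K` with `N𝔭^m = n`. -/
def DK (K : Type*) [Field K] [NumberField K] (n : ℕ) : ℕ :=
  Nat.card {𝔞 : Ideal (𝓞 K) // IsPrimeIdealPower 𝔞 ∧ absNorm 𝔞 = n}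

/-- `Λ_K^*(n) = f(K/ℚ; p) · log p` if `n = p^k` is a prime power, and `0` otherwise. -/
def LambdaStarK (K : Type*) [Field K] [NumberField K] (n : ℕ) : ℝ :=
  if IsPrimePow n then (resDeg K n.minFac : ℝ) * Real.log n.minFac else 0

end

/-- The additive character `t ↦ e^{2πit}` of `ℝ`. -/
noncomputable def expCircle (t : ℝ) : ℂ := Complex.exp (Complex.I * (2 * Real.pi * t : ℝ))

lemma expCircle_add (s t : ℝ) : expCircle (s + t) = expCircle s * expCircle t := by
  simp only [expCircle, ← Complex.exp_add]
  congr 1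
  push_cast
  ring

lemma norm_expCircle (t : ℝ) : ‖expCircle t‖ = 1 := by
  rw [expCircle, mul_comm]
  exact Complex.norm_exp_ofReal_mul_I _

lemma expCircle_intCast (m : ℤ) : expCircle m = 1 := by
  rw [expCircle, Complex.exp_eq_one_iff]
  exact ⟨m, by push_cast; ring⟩

lemma conj_expCircle (t : ℝ) : (starRingEnd ℂ) (expCircle t) = expCircle (-t) := by
  rw [expCircle, expCircle, ← Complex.exp_conj]
  congr 1
  simp only [map_mul, Complex.conj_I, Complex.conj_ofReal]
  push_cast
  ring

lemma expCircle_natCast_mul (k : ℕ) (t : ℝ) : expCircle (k * t) = expCircle t ^ k := by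
  rw [expCircle, expCircle, ← Complex.exp_nat_mul]
  congr 1
  push_cast
  ring

lemma four_mul_abs_le_norm_expCircle_sub_one {t : ℝ} (ht : |t| ≤ 1 / 2) :
    4 * |t| ≤ ‖expCircle t - 1‖ := by
  have hpi := Real.pi_pos
  rw [expCircle, Complex.norm_exp_I_mul_ofReal_sub_one, Real.norm_eq_abs, abs_mul, abs_two]
  have h2 : 2 * Real.pi * t / 2 = Real.pi * t := by ring
  have h := Real.mul_le_sin (x := Real.pi * |t|) (by positivity) (by nlinarith)
  have h3 : 2 / Real.pi * (Real.pi * |t|) = 2 * |t| := by field_simp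
  have h4 : Real.sin (Real.pi * |t|) ≤ |Real.sin (Real.pi * t)| := by
    rcases abs_cases t with ⟨h, _⟩ | ⟨h, _⟩
    · rw [h]; exact le_abs_self _
    · rw [h, mul_neg, Real.sin_neg]; exact neg_le_abs _
  rw [h2]
  linarith

lemma norm_sum_expCircle_mul_abs_le (m : ℕ) (α : ℝ) :
    ‖∑ k ∈ Finset.range m, expCircle (k * α)‖ * (2 * |α - round α|) ≤ 1 := by
  set t := α - round α with ht
  have hα : expCircle α = expCircle t := by
    have : α = t + (round α : ℤ) := by rw [ht]; ring
    rw [this, expCircle_add, expCircle_intCast, mul_one]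
  have h1 : (∑ k ∈ Finset.range m, expCircle (k * α)) * (expCircle t - 1) =
      expCircle t ^ m - 1 := by
    simp only [expCircle_natCast_mul, hα]
    exact geom_sum_mul _ _
  have h2 : ‖expCircle t ^ m - 1‖ ≤ 2 := by
    refine (norm_sub_le _ _).trans ?_
    rw [norm_pow, norm_expCircle]; norm_num
  have h3 := four_mul_abs_le_norm_expCircle_sub_one (abs_sub_round α)
  rw [← h1, norm_mul] at h2
  nlinarith [norm_nonneg (∑ k ∈ Finset.range m, expCircle (k * α)),
    mul_le_mul_of_nonneg_left h3 (norm_nonneg (∑ k ∈ Finset.range m, expCircle (k * α)))]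

lemma sq_norm_sum_expCircle_le (L : ℕ) (α : ℝ) :
    ‖∑ k ∈ Finset.range (2 * L), expCircle (k * α)‖ ^ 2 ≤
      8 * L ^ 2 * (1 / (1 + (⌊L * (α - round α)⌋ : ℝ) ^ 2)) := by
  have h1 := norm_sum_expCircle_mul_abs_le (2 * L) α
  have h2 : ‖∑ k ∈ Finset.range (2 * L), expCircle (k * α)‖ ≤ 2 * L := by
    refine (norm_sum_le _ _).trans ?_
    simp [norm_expCircle]
  set D := ‖∑ k ∈ Finset.range (2 * L), expCircle (k * α)‖
  have hD : 0 ≤ D := norm_nonneg _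
  set t := α - round α
  set u := (L : ℝ) * t with hu
  have hL : (0 : ℝ) ≤ L := Nat.cast_nonneg L
  have hDu : D * (2 * |u|) ≤ L := by
    rw [hu, abs_mul, abs_of_nonneg hL]
    nlinarith [mul_le_mul_of_nonneg_left h1 hL]
  have hfl := Int.floor_le u
  have hlt := Int.lt_floor_add_one u
  rw [mul_one_div, le_div_iff₀ (by positivity)]
  by_cases hk : |(⌊u⌋ : ℝ)| ≤ 1
  · have hk2 : (⌊u⌋ : ℝ) ^ 2 ≤ 1 := (sq_le_one_iff_abs_le_one _).mpr hk
    have hD2 : D ^ 2 ≤ (2 * L) ^ 2 := by gcongr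
    calc D ^ 2 * (1 + (⌊u⌋ : ℝ) ^ 2) ≤ (2 * (L : ℝ)) ^ 2 * (1 + 1) := by gcongr
      _ = 8 * (L : ℝ) ^ 2 := by ring
  · push Not at hk
    have hk2 : |(⌊u⌋ : ℝ)| ≤ 2 * |u| := by
      have hfloor : 2 ≤ |⌊u⌋| := by
        have : (1 : ℝ) < ((|⌊u⌋| : ℤ) : ℝ) := by rwa [Int.cast_abs]
        have : 1 < |⌊u⌋| := by exact_mod_cast this
        omega
      have hfloor' : (2 : ℝ) ≤ |(⌊u⌋ : ℝ)| := by exact_mod_cast hfloor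
      rcases abs_cases (⌊u⌋ : ℝ) with ⟨h, _⟩ | ⟨h, _⟩ <;>
        rcases abs_cases u with ⟨h', _⟩ | ⟨h', _⟩ <;> rw [h, h'] <;> rw [h] at hfloor' <;> linarith
    have h3 : D * |(⌊u⌋ : ℝ)| ≤ L := (mul_le_mul_of_nonneg_left hk2 hD).trans hDu
    have h4 : (D * |(⌊u⌋ : ℝ)|) ^ 2 ≤ (L : ℝ) ^ 2 := by gcongr
    rw [mul_pow, sq_abs] at h4
    nlinarith [mul_self_le_mul_self hD h2]

lemma summable_one_div_one_add_sq : Summable fun k : ℤ ↦ (1 / (1 + (k : ℝ) ^ 2)) := by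
  have h := (Real.summable_one_div_int_pow (p := 2)).mpr (by norm_num)
  refine Summable.of_norm_bounded_eventually (g := fun k : ℤ ↦ 1 / (k : ℝ) ^ 2) h ?_
  filter_upwards [(Set.finite_singleton (0 : ℤ)).compl_mem_cofinite] with k hk
  have hk0 : (k : ℝ) ≠ 0 := by exact_mod_cast hk
  rw [Real.norm_of_nonneg (by positivity)]
  gcongr
  linarith

/-- A family of reals is `L⁻¹`-spaced modulo one on `T`. -/
def SpacedModOne {ι : Type*} (T : Finset ι) (α : ι → ℝ) (L : ℕ) : Prop :=
  ∀ r ∈ T, ∀ s ∈ T, r ≠ s → ∀ m : ℤ, 1 ≤ L * |α r - α s - m|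

lemma SpacedModOne.sum_sq_norm_kernel_le {ι : Type*} {T : Finset ι} {α : ι → ℝ} {L : ℕ}
    (h : SpacedModOne T α L) (β : ℝ) :
    ∑ s ∈ T, ‖∑ k ∈ Finset.range (2 * L), expCircle (k * (β - α s))‖ ^ 2 ≤
      8 * L ^ 2 * ∑' k : ℤ, (1 / (1 + (k : ℝ) ^ 2)) := by
  classical
  let κ : ι → ℤ := fun s ↦ ⌊L * (β - α s - round (β - α s))⌋
  have hinj : Set.InjOn κ T := by
    intro r hr s hs hrs
    by_contra hne
    have h1 := Int.abs_sub_lt_one_of_floor_eq_floor hrs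
    have h2 := h r hr s hs hne (round (β - α s) - round (β - α r))
    have h3 : (L : ℝ) * (β - α r - round (β - α r)) - L * (β - α s - round (β - α s)) =
      -(L * (α r - α s - (round (β - α s) - round (β - α r) : ℤ))) := by push_cast; ring
    rw [h3, abs_neg, abs_mul, Nat.abs_cast] at h1
    linarith
  calc _ ≤ ∑ s ∈ T, 8 * (L : ℝ) ^ 2 * (1 / (1 + (κ s : ℝ) ^ 2)) :=
        Finset.sum_le_sum fun s _ ↦ sq_norm_sum_expCircle_le L (β - α s)
    _ = 8 * (L : ℝ) ^ 2 * ∑ k ∈ T.image κ, (1 / (1 + (k : ℝ) ^ 2)) := by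
        rw [← Finset.mul_sum, Finset.sum_image hinj]
    _ ≤ _ := by
        gcongr
        exact summable_one_div_one_add_sq.sum_le_tsum _ (fun _ _ ↦ by positivity)

lemma sum_sum_mul_le_of_symm {ι : Type*} (T : Finset ι) (b : ι → ℝ) (k : ι → ι → ℝ)
    (hk : ∀ r s, 0 ≤ k r s) (hsymm : ∀ r s, k r s = k s r) (C : ℝ)
    (hC : ∀ r ∈ T, ∑ s ∈ T, k r s ≤ C) :
    ∑ r ∈ T, ∑ s ∈ T, b r * b s * k r s ≤ C * ∑ r ∈ T, b r ^ 2 := by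
  have h1 : ∑ r ∈ T, ∑ s ∈ T, b r ^ 2 * k r s ≤ C * ∑ r ∈ T, b r ^ 2 := by
    rw [Finset.mul_sum]
    refine Finset.sum_le_sum fun r hr ↦ ?_
    rw [← Finset.mul_sum, mul_comm C]
    exact mul_le_mul_of_nonneg_left (hC r hr) (sq_nonneg _)
  have h2 : ∑ r ∈ T, ∑ s ∈ T, b s ^ 2 * k r s = ∑ r ∈ T, ∑ s ∈ T, b r ^ 2 * k r s := by
    rw [Finset.sum_comm]
    simp only [hsymm]
  have h3 : ∑ r ∈ T, ∑ s ∈ T, b r * b s * k r s ≤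
      ∑ r ∈ T, ∑ s ∈ T, (b r ^ 2 * k r s + b s ^ 2 * k r s) / 2 := by
    refine Finset.sum_le_sum fun r _ ↦ Finset.sum_le_sum fun s _ ↦ ?_
    nlinarith [mul_nonneg (sq_nonneg (b r - b s)) (hk r s)]
  simp only [← Finset.sum_div, Finset.sum_add_distrib, h2] at h3
  linarith

lemma sum_sq_norm_sum_sub_le {ι : Type*} (T : Finset ι) (α : ι → ℝ) (b : ι → ℂ) (m : ℕ) :
    ∑ i ∈ Finset.range m, ∑ j ∈ Finset.range m,
        ‖∑ r ∈ T, b r * expCircle (((i : ℝ) - j) * α r)‖ ^ 2 ≤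
      ∑ r ∈ T, ∑ s ∈ T, ‖b r‖ * ‖b s‖ *
        ‖∑ k ∈ Finset.range m, expCircle (k * (α r - α s))‖ ^ 2 := by
  have key : ((∑ i ∈ Finset.range m, ∑ j ∈ Finset.range m,
        ‖∑ r ∈ T, b r * expCircle (((i : ℝ) - j) * α r)‖ ^ 2 : ℝ) : ℂ) =
      ∑ r ∈ T, ∑ s ∈ T, b r * (starRingEnd ℂ) (b s) *
        ((∑ k ∈ Finset.range m, expCircle (k * (α r - α s))) *
          (starRingEnd ℂ) (∑ k ∈ Finset.range m, expCircle (k * (α r - α s)))) := by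
    push_cast
    simp only [← Complex.mul_conj', map_sum, map_mul, conj_expCircle, Finset.sum_mul_sum]
    simp only [Finset.mul_sum]
    rw [Finset.sum_congr rfl fun i _ ↦ Finset.sum_comm, Finset.sum_comm]
    refine Finset.sum_congr rfl fun r _ ↦ ?_
    rw [Finset.sum_congr rfl fun i _ ↦ Finset.sum_comm, Finset.sum_comm]
    refine Finset.sum_congr rfl fun s _ ↦ Finset.sum_congr rfl fun i _ ↦
      Finset.sum_congr rfl fun j _ ↦ ?_
    rw [mul_mul_mul_comm, ← expCircle_add, ← expCircle_add]
    congr 2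
    ring
  have h0 := congrArg norm key
  rw [Complex.norm_real, Real.norm_of_nonneg (by positivity)] at h0
  rw [h0]
  refine (norm_sum_le _ _).trans (Finset.sum_le_sum fun r _ ↦ (norm_sum_le _ _).trans
    (Finset.sum_le_sum fun s _ ↦ ?_))
  simp only [norm_mul, RCLike.norm_conj, sq, le_refl]

/-- The dual additive large sieve inequality. -/
lemma SpacedModOne.dual_large_sieve {ι : Type*} {T : Finset ι} {α : ι → ℝ} {L : ℕ}
    (h : SpacedModOne T α L) (hL : 0 < L) (b : ι → ℂ) :
    ∑ n ∈ Finset.range (L + 1), ‖∑ r ∈ T, b r * expCircle (n * α r)‖ ^ 2 ≤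
      8 * (∑' k : ℤ, (1 / (1 + (k : ℝ) ^ 2))) * L * ∑ r ∈ T, ‖b r‖ ^ 2 := by
  have hL' : (0 : ℝ) < L := by exact_mod_cast hL
  have h1 : (L : ℝ) * ∑ n ∈ Finset.range (L + 1), ‖∑ r ∈ T, b r * expCircle (n * α r)‖ ^ 2 ≤
      ∑ j ∈ Finset.range (2 * L), ∑ i ∈ Finset.range (2 * L),
        ‖∑ r ∈ T, b r * expCircle (((i : ℝ) - j) * α r)‖ ^ 2 := by
    calc _ = ∑ j ∈ Finset.range L, ∑ n ∈ Finset.range (L + 1),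
            ‖∑ r ∈ T, b r * expCircle (n * α r)‖ ^ 2 := by simp
      _ ≤ ∑ j ∈ Finset.range L, ∑ i ∈ Finset.range (2 * L),
            ‖∑ r ∈ T, b r * expCircle (((i : ℝ) - j) * α r)‖ ^ 2 := by
          refine Finset.sum_le_sum fun j hj ↦ ?_
          rw [Finset.mem_range] at hj
          have himage := Finset.sum_image (s := Finset.range (L + 1)) (g := fun n ↦ n + j)
            (f := fun i : ℕ ↦ ‖∑ r ∈ T, b r * expCircle (((i : ℝ) - j) * α r)‖ ^ 2)
            (fun a _ c _ hac ↦ by simpa using hac)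
          simp only [Nat.cast_add, add_sub_cancel_right] at himage
          rw [← himage]
          refine Finset.sum_le_sum_of_subset_of_nonneg ?_ (fun _ _ _ ↦ by positivity)
          intro i hi
          simp only [Finset.mem_image, Finset.mem_range] at hi ⊢
          omega
      _ ≤ _ := Finset.sum_le_sum_of_subset_of_nonneg
          (Finset.range_mono (by omega)) (fun _ _ _ ↦ by positivity)
  rw [Finset.sum_comm] at h1
  have h2 := h1.trans (sum_sq_norm_sum_sub_le T α b (2 * L))
  have h3 := h2.trans (sum_sum_mul_le_of_symm T (fun r ↦ ‖b r‖)
    (fun r s ↦ ‖∑ k ∈ Finset.range (2 * L), expCircle (k * (α r - α s))‖ ^ 2)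
    (fun _ _ ↦ by positivity) (fun r s ↦ by
      rw [← RCLike.norm_conj, map_sum]
      simp only [conj_expCircle]
      congr 3
      ext k
      congr 1
      ring) _ (fun r _ ↦ h.sum_sq_norm_kernel_le (α r)))
  refine le_of_mul_le_mul_left (h3.trans (le_of_eq ?_)) hL'
  ring

/-- The additive large sieve inequality. -/
lemma SpacedModOne.large_sieve {ι : Type*} {T : Finset ι} {α : ι → ℝ} {L : ℕ}
    (h : SpacedModOne T α L) (hL : 0 < L) (a : ℕ → ℂ) :
    ∑ r ∈ T, ‖∑ n ∈ Finset.range (L + 1), a n * expCircle (n * α r)‖ ^ 2 ≤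
      8 * (∑' k : ℤ, (1 / (1 + (k : ℝ) ^ 2))) * L * ∑ n ∈ Finset.range (L + 1), ‖a n‖ ^ 2 := by
  set S : ι → ℂ := fun r ↦ ∑ n ∈ Finset.range (L + 1), a n * expCircle (n * α r)
  set B := ∑ r ∈ T, ‖S r‖ ^ 2 with hB
  set E := ∑ n ∈ Finset.range (L + 1), ‖a n‖ ^ 2
  set C : ℝ := 8 * (∑' k : ℤ, (1 / (1 + (k : ℝ) ^ 2))) * L
  have hdual := h.dual_large_sieve hL (fun r ↦ (starRingEnd ℂ) (S r))
  simp only [RCLike.norm_conj] at hdual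
  have hBnonneg : 0 ≤ B := by positivity
  have hE : 0 ≤ E := by positivity
  have hC : 0 ≤ C := mul_nonneg (mul_nonneg (by norm_num) (tsum_nonneg fun _ ↦ by positivity))
    (Nat.cast_nonneg L)
  have h1 : (B : ℂ) = ∑ n ∈ Finset.range (L + 1),
      a n * ∑ r ∈ T, (starRingEnd ℂ) (S r) * expCircle (n * α r) := by
    rw [hB]
    push_cast
    simp only [← Complex.mul_conj', Finset.mul_sum]
    rw [Finset.sum_comm]
    refine Finset.sum_congr rfl fun r _ ↦ ?_
    simp only [S, Finset.sum_mul]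
    exact Finset.sum_congr rfl fun n _ ↦ by ring
  have h2 : B ≤ ∑ n ∈ Finset.range (L + 1),
      ‖a n‖ * ‖∑ r ∈ T, (starRingEnd ℂ) (S r) * expCircle (n * α r)‖ := by
    have h0 := congrArg norm h1
    rw [Complex.norm_real, Real.norm_of_nonneg hBnonneg] at h0
    rw [h0]
    refine (norm_sum_le _ _).trans (le_of_eq ?_)
    simp only [norm_mul]
  have h3 := Finset.sum_mul_sq_le_sq_mul_sq (Finset.range (L + 1)) (fun n ↦ ‖a n‖)
    (fun n ↦ ‖∑ r ∈ T, (starRingEnd ℂ) (S r) * expCircle (n * α r)‖)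
  have h4 : B ^ 2 ≤ E * (C * B) := by
    calc B ^ 2 ≤ _ := by gcongr
      _ ≤ _ := h3
      _ ≤ _ := by gcongr
  rcases hBnonneg.eq_or_lt with h0 | h0
  · rw [← h0]; positivity
  · refine le_of_mul_le_mul_left ?_ h0
    nlinarith

/-- Reduced fractions `a / q` with denominators `1 ≤ q ≤ Q`, as pairs `⟨q, a⟩`. -/
def fareyPairs (Q : ℕ) : Finset (Σ _ : ℕ, ℕ) :=
  (Finset.Icc 1 Q).sigma fun q ↦ (Finset.range q).filter fun a ↦ a.Coprime q

lemma spacedModOne_fareyPairs {Q L : ℕ} (hL : Q ^ 2 ≤ L) :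
    SpacedModOne (fareyPairs Q) (fun r ↦ (r.2 : ℝ) / r.1) L := by
  rintro ⟨q, a⟩ hr ⟨q', a'⟩ hs hne m
  simp only [fareyPairs, Finset.mem_sigma, Finset.mem_Icc, Finset.mem_filter,
    Finset.mem_range] at hr hs
  obtain ⟨⟨hq1, hqQ⟩, haq, hcop⟩ := hr
  obtain ⟨⟨hq1', hqQ'⟩, haq', hcop'⟩ := hs
  dsimp only
  have hq : (0 : ℝ) < q := by exact_mod_cast hq1
  have hq' : (0 : ℝ) < q' := by exact_mod_cast hq1'
  set k : ℤ := a * q' - a' * q - m * (q * q') with hk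
  have hk0 : k ≠ 0 := by
    intro h0
    apply hne
    have h1 : (a : ℤ) * q' = q * (a' + m * q') := by linarith
    have h2 : (a' : ℤ) * q = q' * (a - m * q) := by linarith
    have hd1 : (q : ℤ) ∣ q' :=
      (Nat.isCoprime_iff_coprime.mpr hcop).symm.dvd_of_dvd_mul_left ⟨_, h1⟩
    have hd2 : (q' : ℤ) ∣ q :=
      (Nat.isCoprime_iff_coprime.mpr hcop').symm.dvd_of_dvd_mul_left ⟨_, h2⟩
    have hqq : q = q' := Nat.dvd_antisymm (by exact_mod_cast hd1) (by exact_mod_cast hd2)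
    subst hqq
    have hqz : (q : ℤ) ≠ 0 := by exact_mod_cast (by omega : q ≠ 0)
    have h3 : (a : ℤ) = a' + m * q := by
      apply mul_right_cancel₀ hqz
      linarith
    have hm : m = 0 := by
      have ha : (a : ℤ) < q := by exact_mod_cast haq
      have ha' : (a' : ℤ) < q := by exact_mod_cast haq'
      have h0a : (0 : ℤ) ≤ a := by positivity
      have h0a' : (0 : ℤ) ≤ a' := by positivity
      by_contra hm0
      rcases lt_or_gt_of_ne hm0 with h | h
      · nlinarith
      · nlinarith
    rw [hm] at h3
    have : a = a' := by exact_mod_cast (by linarith : (a : ℤ) = a')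
    rw [this]
  have hk1 : (1 : ℝ) ≤ |(k : ℝ)| := by exact_mod_cast Int.one_le_abs hk0
  have hfrac : (a : ℝ) / q - a' / q' - m = k / (q * q') := by
    rw [hk]; push_cast; field_simp
  rw [hfrac, abs_div, abs_of_pos (mul_pos hq hq'), mul_div_assoc', le_div_iff₀ (mul_pos hq hq'),
    one_mul]
  have hqL : (q : ℝ) * q' ≤ L := by
    have : q * q' ≤ L := (Nat.mul_le_mul hqQ hqQ').trans (by rwa [← sq])
    exact_mod_cast this
  nlinarith

lemma sum_sq_norm_sum_mul_stdAddChar {q : ℕ} [NeZero q] (f : ZMod q → ℂ) :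
    ∑ b, ‖∑ a, f a * ZMod.stdAddChar (b * a)‖ ^ 2 = q * ∑ a, ‖f a‖ ^ 2 := by
  have key : ((∑ b, ‖∑ a, f a * ZMod.stdAddChar (b * a)‖ ^ 2 : ℝ) : ℂ) =
      ((q * ∑ a, ‖f a‖ ^ 2 : ℝ) : ℂ) := by
    push_cast
    simp only [← Complex.mul_conj', map_sum, map_mul, Finset.sum_mul_sum]
    simp only [Finset.mul_sum]
    rw [Finset.sum_comm]
    refine Finset.sum_congr rfl fun a _ ↦ ?_
    rw [Finset.sum_comm]
    have h : ∀ c : ZMod q, ∑ b : ZMod q, f a * ZMod.stdAddChar (b * a) *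
        ((starRingEnd ℂ) (f c) * (starRingEnd ℂ) (ZMod.stdAddChar (b * c))) =
        if c = a then (q : ℂ) * (f a * (starRingEnd ℂ) (f a)) else 0 := by
      intro c
      have h1 := AddChar.sum_mulShift (a - c) (ZMod.isPrimitive_stdAddChar q)
      have h2 : ∀ b : ZMod q, f a * ZMod.stdAddChar (b * a) *
        ((starRingEnd ℂ) (f c) * (starRingEnd ℂ) (ZMod.stdAddChar (b * c))) =
          f a * (starRingEnd ℂ) (f c) * ZMod.stdAddChar (b * (a - c)) := by
        intro b
        rw [mul_sub, sub_eq_add_neg, AddChar.map_add_eq_mul, AddChar.map_neg_eq_conj]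
        ring
      simp only [h2, ← Finset.mul_sum, h1, sub_eq_zero, ZMod.card]
      split_ifs with h3 h4 h4
      · subst h3; ring
      · exact absurd h3.symm h4
      · exact absurd h4.symm h3
      · simp
    simp only [h, Finset.sum_ite_eq', Finset.mem_univ, if_true]
  exact_mod_cast key

lemma sq_norm_gaussSum_of_isPrimitive {q : ℕ} [NeZero q] {χ : DirichletCharacter ℂ q}
    (hχ : χ.IsPrimitive) : ‖gaussSum χ (ZMod.stdAddChar (N := q))‖ ^ 2 = q := by
  have h := sum_sq_norm_sum_mul_stdAddChar (fun a ↦ χ a)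
  have h1 : ∀ b : ZMod q, ∑ a, χ a * ZMod.stdAddChar (b * a) =
      χ⁻¹ b * gaussSum χ (ZMod.stdAddChar (N := q)) := fun b ↦ by
    rw [← gaussSum_mulShift_of_isPrimitive _ hχ b]
    simp only [gaussSum, AddChar.mulShift_apply]
  have h2 : ∀ b : ZMod q, ‖χ⁻¹ b‖ = ‖χ b‖ := fun b ↦ by
    rw [← MulChar.star_apply', norm_star]
  simp only [h1, norm_mul, mul_pow, h2, ← Finset.sum_mul] at h
  rw [mul_comm] at h
  refine mul_right_cancel₀ (ne_of_gt ?_) h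
  refine Finset.sum_pos' (fun _ _ ↦ by positivity) ⟨1, Finset.mem_univ _, by simp⟩

lemma sum_dirichletCharacter_mul_conj {q : ℕ} [NeZero q] (a b : ZMod q) :
    ∑ χ : DirichletCharacter ℂ q, χ a * (starRingEnd ℂ) (χ b) =
      if b = a ∧ IsUnit b then (q.totient : ℂ) else 0 := by
  by_cases hb : IsUnit b
  · have h1 : ∀ χ : DirichletCharacter ℂ q, χ a * (starRingEnd ℂ) (χ b) = χ b⁻¹ * χ a := by
      intro χ
      have h2 : (starRingEnd ℂ) (χ b) = χ b⁻¹ := by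
        have := MulChar.star_apply' χ b
        rw [RCLike.star_def] at this
        rw [this, MulChar.inv_apply]
        obtain ⟨u, rfl⟩ := hb
        rw [Ring.inverse_unit, ZMod.inv_coe_unit]
      rw [h2, mul_comm]
    simp only [h1, DirichletCharacter.sum_char_inv_mul_char_eq ℂ hb, hb, and_true]
  · simp [MulChar.map_nonunit _ hb, hb]

lemma sum_dirichletCharacter_sq_norm {q : ℕ} [NeZero q] (S : ZMod q → ℂ) :
    ∑ χ : DirichletCharacter ℂ q, ‖∑ a, χ a * S a‖ ^ 2 =
      q.totient * ∑ a with IsUnit a, ‖S a‖ ^ 2 := by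
  have key : ((∑ χ : DirichletCharacter ℂ q, ‖∑ a, χ a * S a‖ ^ 2 : ℝ) : ℂ) =
      ((q.totient * ∑ a with IsUnit a, ‖S a‖ ^ 2 : ℝ) : ℂ) := by
    push_cast
    simp only [← Complex.mul_conj', map_sum, map_mul, Finset.sum_mul_sum]
    simp only [Finset.mul_sum]
    rw [Finset.sum_comm, Finset.sum_filter]
    refine Finset.sum_congr rfl fun a _ ↦ ?_
    rw [Finset.sum_comm]
    have h : ∀ b : ZMod q, ∑ χ : DirichletCharacter ℂ q, χ a * S a *
        ((starRingEnd ℂ) (χ b) * (starRingEnd ℂ) (S b)) =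
        if b = a then (if IsUnit b then (q.totient : ℂ) * (S a * (starRingEnd ℂ) (S b)) else 0)
          else 0 := by
      intro b
      have h1 : ∀ χ : DirichletCharacter ℂ q, χ a * S a *
          ((starRingEnd ℂ) (χ b) * (starRingEnd ℂ) (S b)) =
          χ a * (starRingEnd ℂ) (χ b) * (S a * (starRingEnd ℂ) (S b)) := fun χ ↦ by ring
      simp only [h1, ← Finset.sum_mul, sum_dirichletCharacter_mul_conj, ite_and, ite_mul, zero_mul]
    simp only [h, Finset.sum_ite_eq', Finset.mem_univ, if_true]
  exact_mod_cast key

lemma stdAddChar_mul_natCast {q : ℕ} [NeZero q] (a n : ℕ) :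
    ZMod.stdAddChar ((n : ZMod q) * (a : ZMod q)) = expCircle (n * ((a : ℝ) / q)) := by
  have h := ZMod.stdAddChar_coe (N := q) (n * a : ℤ)
  push_cast at h
  rw [h, expCircle]
  congr 1
  push_cast
  ring

lemma sum_isUnit_eq_sum_range_coprime {q : ℕ} [NeZero q] (g : ZMod q → ℝ) :
    ∑ a with IsUnit a, g a = ∑ a ∈ (Finset.range q).filter (fun a ↦ a.Coprime q), g a := by
  refine Finset.sum_bij' (fun a _ ↦ a.val) (fun a _ ↦ (a : ZMod q)) ?_ ?_ ?_ ?_ ?_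
  · intro a ha
    rw [Finset.mem_filter] at ha ⊢
    refine ⟨Finset.mem_range.mpr (ZMod.val_lt a), ?_⟩
    rw [← ZMod.isUnit_iff_coprime, ZMod.natCast_zmod_val]
    exact ha.2
  · intro a ha
    rw [Finset.mem_filter] at ha ⊢
    exact ⟨Finset.mem_univ _, (ZMod.isUnit_iff_coprime _ _).mpr ha.2⟩
  · intro a _
    exact ZMod.natCast_zmod_val a
  · intro a ha
    rw [Finset.mem_filter, Finset.mem_range] at ha
    exact ZMod.val_cast_of_lt ha.1
  · intro a _
    simp

lemma mul_sum_isPrimitive_le {q : ℕ} (hq : 0 < q) (N : ℕ) (c : ℕ → ℂ) :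
    (q : ℝ) * ∑ᶠ χ ∈ {χ : DirichletCharacter ℂ q | χ.IsPrimitive},
        ‖∑ n ∈ Finset.range N, c n * χ n‖ ^ 2 ≤
      q.totient * ∑ a ∈ (Finset.range q).filter (fun a ↦ a.Coprime q),
        ‖∑ n ∈ Finset.range N, c n * expCircle (n * ((a : ℝ) / q))‖ ^ 2 := by
  classical
  have : NeZero q := ⟨hq.ne'⟩
  set S : ZMod q → ℂ := fun a ↦ ∑ n ∈ Finset.range N, c n * ZMod.stdAddChar ((n : ZMod q) * a)
  have hS : ∀ a : ℕ, S a = ∑ n ∈ Finset.range N, c n * expCircle (n * ((a : ℝ) / q)) := fun a ↦ by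
    simp only [S, stdAddChar_mul_natCast]
  have hprim : ∀ χ : DirichletCharacter ℂ q, χ.IsPrimitive →
      (q : ℝ) * ‖∑ n ∈ Finset.range N, c n * χ n‖ ^ 2 = ‖∑ a, χ⁻¹ a * S a‖ ^ 2 := by
    intro χ hχ
    have hχ' : χ⁻¹.IsPrimitive := by
      rw [DirichletCharacter.isPrimitive_def, DirichletCharacter.conductor_inv]
      exact hχ
    have h1 : ∑ a, χ⁻¹ a * S a = gaussSum χ⁻¹ (ZMod.stdAddChar (N := q)) *
        ∑ n ∈ Finset.range N, c n * χ n := by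
      simp only [S, Finset.mul_sum]
      rw [Finset.sum_comm]
      refine Finset.sum_congr rfl fun n _ ↦ ?_
      have h2 := gaussSum_mulShift_of_isPrimitive (ZMod.stdAddChar (N := q)) hχ' (n : ZMod q)
      rw [inv_inv] at h2
      rw [mul_left_comm, mul_comm (gaussSum _ _), ← h2, gaussSum, Finset.mul_sum]
      refine Finset.sum_congr rfl fun a _ ↦ ?_
      rw [AddChar.mulShift_apply]
      ring
    rw [h1, norm_mul, mul_pow, sq_norm_gaussSum_of_isPrimitive hχ']
  have hsum : ∑ᶠ χ ∈ {χ : DirichletCharacter ℂ q | χ.IsPrimitive},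
        ‖∑ n ∈ Finset.range N, c n * χ n‖ ^ 2 =
      ∑ χ : DirichletCharacter ℂ q with χ.IsPrimitive,
        ‖∑ n ∈ Finset.range N, c n * χ n‖ ^ 2 := by
    rw [← finsum_mem_finset_eq_sum]
    simp
  rw [hsum, Finset.mul_sum]
  calc _ = ∑ χ : DirichletCharacter ℂ q with χ.IsPrimitive, ‖∑ a, χ⁻¹ a * S a‖ ^ 2 :=
        Finset.sum_congr rfl fun χ hχ ↦ hprim χ (Finset.mem_filter.mp hχ).2
    _ ≤ ∑ χ : DirichletCharacter ℂ q, ‖∑ a, χ⁻¹ a * S a‖ ^ 2 :=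
        Finset.sum_le_sum_of_subset_of_nonneg (Finset.filter_subset _ _)
          (fun _ _ _ ↦ by positivity)
    _ = ∑ χ : DirichletCharacter ℂ q, ‖∑ a, χ a * S a‖ ^ 2 :=
        Equiv.sum_comp (Equiv.inv (DirichletCharacter ℂ q)) (fun χ ↦ ‖∑ a, χ a * S a‖ ^ 2)
    _ = _ := by
        rw [sum_dirichletCharacter_sq_norm, sum_isUnit_eq_sum_range_coprime]
        simp only [hS]

/-- The multiplicative large sieve inequality. -/
theorem exists_multiplicative_large_sieve : ∃ C : ℝ, 0 < C ∧ ∀ (N Q : ℕ) (c : ℕ → ℂ),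
    ∑ q ∈ Finset.Icc 1 Q, (q / q.totient : ℝ) *
        ∑ᶠ χ ∈ {χ : DirichletCharacter ℂ q | χ.IsPrimitive},
          ‖∑ n ∈ Finset.range (N + 1), c n * χ n‖ ^ 2 ≤
      C * (N + Q ^ 2) * ∑ n ∈ Finset.range (N + 1), ‖c n‖ ^ 2 := by
  refine ⟨8 * ∑' k : ℤ, (1 / (1 + (k : ℝ) ^ 2)), ?_, fun N Q c ↦ ?_⟩
  · refine mul_pos (by norm_num) (summable_one_div_one_add_sq.tsum_pos
      (fun _ ↦ by positivity) 0 (by norm_num))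
  rcases Nat.eq_zero_or_pos Q with rfl | hQ
  · simp only [Finset.Icc_eq_empty (by norm_num : ¬ (1 ≤ 0)), Finset.sum_empty]
    have : 0 ≤ ∑' k : ℤ, (1 / (1 + (k : ℝ) ^ 2)) := tsum_nonneg fun _ ↦ by positivity
    positivity
  have hsub : Finset.range (N + 1) ⊆ Finset.range (N + Q ^ 2 + 1) := Finset.range_mono (by omega)
  set c' : ℕ → ℂ := fun n ↦ if n ∈ Finset.range (N + 1) then c n else 0 with hc'
  have hext : ∀ F : ℕ → ℂ, ∑ n ∈ Finset.range (N + Q ^ 2 + 1), c' n * F n =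
      ∑ n ∈ Finset.range (N + 1), c n * F n := by
    intro F
    rw [← Finset.sum_subset hsub (fun n _ hn ↦ by simp only [hc', if_neg hn, zero_mul])]
    exact Finset.sum_congr rfl fun n hn ↦ by simp only [hc', if_pos hn]
  have hnorm : ∑ n ∈ Finset.range (N + Q ^ 2 + 1), ‖c' n‖ ^ 2 =
      ∑ n ∈ Finset.range (N + 1), ‖c n‖ ^ 2 := by
    rw [← Finset.sum_subset hsub (fun n _ hn ↦ by
      simp only [hc', if_neg hn, norm_zero, ne_eq, OfNat.ofNat_ne_zero, not_false_eq_true,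
        zero_pow])]
    exact Finset.sum_congr rfl fun n hn ↦ by simp only [hc', if_pos hn]
  have h := (spacedModOne_fareyPairs (Q := Q) (L := N + Q ^ 2) (by omega)).large_sieve
    (by positivity) c'
  simp only [hext, hnorm, fareyPairs, Finset.sum_sigma] at h
  push_cast at h
  refine le_trans (Finset.sum_le_sum fun q hq ↦ ?_) h
  have hq0 : 0 < q := (Finset.mem_Icc.mp hq).1
  have h1 := mul_sum_isPrimitive_le hq0 (N + 1) c
  have hφ : (0 : ℝ) < q.totient := by exact_mod_cast Nat.totient_pos.mpr hq0
  rw [div_mul_eq_mul_div, div_le_iff₀ hφ, mul_comm _ (q.totient : ℝ)]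
  exact h1

section Coefficients

variable {K : Type*} [Field K] [NumberField K]

lemma exists_prime_mem_and_absNorm_eq_pow {𝔭 : Ideal (𝓞 K)} (h𝔭 : 𝔭.IsPrime) (h0 : 𝔭 ≠ ⊥) :
    ∃ p f : ℕ, p.Prime ∧ (p : 𝓞 K) ∈ 𝔭 ∧ f ≠ 0 ∧ absNorm 𝔭 = p ^ f := by
  have : NeZero 𝔭 := ⟨h0⟩
  have hp := Nat.absNorm_under_prime 𝔭
  have hmem := Int.absNorm_under_mem 𝔭
  set p := absNorm (under ℤ 𝔭)
  have hmem' : (p : 𝓞 K) ∈ 𝔭 := by exact_mod_cast hmem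
  have hdvd : absNorm 𝔭 ∣ p ^ Module.finrank ℤ (𝓞 K) := by
    rw [← absNorm_span_natCast]
    exact absNorm_dvd_absNorm_of_le ((span_singleton_le_iff_mem _).mpr hmem')
  obtain ⟨f, _, hf⟩ := (Nat.dvd_prime_pow hp).mp hdvd
  refine ⟨p, f, hp, hmem', ?_, hf⟩
  rintro rfl
  rw [pow_zero, absNorm_eq_one_iff] at hf
  exact h𝔭.ne_top hf

lemma IsPrimeIdealPower.radical_spec {𝔞 : Ideal (𝓞 K)} (h : IsPrimeIdealPower 𝔞) :
    𝔞.radical.IsPrime ∧ 𝔞.radical ≠ ⊥ ∧ (∃ m, 𝔞 = 𝔞.radical ^ m) ∧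
      IsPrimePow (absNorm 𝔞) ∧ ((absNorm 𝔞).minFac : 𝓞 K) ∈ 𝔞.radical := by
  obtain ⟨𝔭, m, h𝔭, h0, hm, rfl⟩ := h
  have hrad : (𝔭 ^ m).radical = 𝔭 := by
    rw [Ideal.radical_pow _ (by omega), h𝔭.radical]
  obtain ⟨p, f, hp, hmem, hf, hN⟩ := exists_prime_mem_and_absNorm_eq_pow h𝔭 h0
  rw [hrad, map_pow, hN, ← pow_mul]
  have hfm : f * m ≠ 0 := mul_ne_zero hf (by omega)
  refine ⟨h𝔭, h0, ⟨m, rfl⟩, hp.isPrimePow.pow hfm, ?_⟩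
  rwa [hp.pow_minFac hfm]

lemma sum_log_absNorm_le {p : ℕ} (hp : p.Prime) (s : Finset (Ideal (𝓞 K)))
    (hs : ∀ 𝔭 ∈ s, 𝔭.IsPrime ∧ 𝔭 ≠ ⊥ ∧ (p : 𝓞 K) ∈ 𝔭) :
    ∑ 𝔭 ∈ s, Real.log (absNorm 𝔭) ≤ Module.finrank ℚ K * Real.log p := by
  have hdvd : ∏ 𝔭 ∈ s, 𝔭 ∣ span {(p : 𝓞 K)} :=
    Finset.prod_primes_dvd _ (fun 𝔭 h𝔭 ↦ prime_of_isPrime (hs 𝔭 h𝔭).2.1 (hs 𝔭 h𝔭).1)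
      (fun 𝔭 h𝔭 ↦ dvd_span_singleton.mpr (hs 𝔭 h𝔭).2.2)
  have hnorm := absNorm_dvd_absNorm_of_le (le_of_dvd hdvd)
  rw [absNorm_span_natCast, map_prod, RingOfIntegers.rank] at hnorm
  have hle := Nat.le_of_dvd (pow_pos hp.pos _) hnorm
  have hpos : ∀ 𝔭 ∈ s, (absNorm 𝔭 : ℝ) ≠ 0 := fun 𝔭 h𝔭 ↦ by
    exact_mod_cast fun h ↦ (hs 𝔭 h𝔭).2.1 (absNorm_eq_zero_iff.mp h)
  rw [← Real.log_prod hpos, ← Real.log_pow]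
  refine Real.log_le_log ?_ (by exact_mod_cast hle)
  exact Finset.prod_pos fun 𝔭 h𝔭 ↦ (Nat.cast_nonneg _).lt_of_ne (hpos 𝔭 h𝔭).symm

lemma LambdaK_nonneg (𝔞 : Ideal (𝓞 K)) : 0 ≤ LambdaK K 𝔞 := by
  unfold LambdaK
  split_ifs
  · exact Real.log_natCast_nonneg _
  · exact le_rfl

variable (K) in
/-- The sum of `LambdaK` over the ideals of norm `n`. -/
noncomputable def normCoeff (n : ℕ) : ℝ :=
  ∑ 𝔞 ∈ (finite_setOfPred_absNorm_eq (S := 𝓞 K) n).toFinset, LambdaK K 𝔞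

lemma normCoeff_nonneg (n : ℕ) : 0 ≤ normCoeff K n :=
  Finset.sum_nonneg fun 𝔞 _ ↦ LambdaK_nonneg 𝔞

lemma normCoeff_le (n : ℕ) :
    normCoeff K n ≤ Module.finrank ℚ K * ArithmeticFunction.vonMangoldt n := by
  set F := (finite_setOfPred_absNorm_eq (S := 𝓞 K) n).toFinset
  have hF : ∀ 𝔞 ∈ F, absNorm 𝔞 = n := fun 𝔞 h ↦ by simpa [F] using h
  have h1 : normCoeff K n =
      ∑ 𝔞 ∈ F.filter IsPrimeIdealPower, Real.log (absNorm 𝔞.radical) := by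
    rw [Finset.sum_filter]
    rfl
  rw [h1]
  rcases (F.filter IsPrimeIdealPower).eq_empty_or_nonempty with he | ⟨𝔟, h𝔟⟩
  · rw [he, Finset.sum_empty]
    exact mul_nonneg (Nat.cast_nonneg _) ArithmeticFunction.vonMangoldt_nonneg
  rw [Finset.mem_filter] at h𝔟
  have hn : IsPrimePow n := hF 𝔟 h𝔟.1 ▸ h𝔟.2.radical_spec.2.2.2.1
  have hinj : Set.InjOn Ideal.radical (F.filter IsPrimeIdealPower : Set (Ideal (𝓞 K))) := by
    intro 𝔞 h𝔞 𝔠 h𝔠 hac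
    simp only [Finset.coe_filter, Set.mem_ofPred_eq] at h𝔞 h𝔠
    obtain ⟨hprime, -, ⟨m, hm⟩, -, -⟩ := h𝔞.2.radical_spec
    obtain ⟨-, -, ⟨k, hk⟩, -, -⟩ := h𝔠.2.radical_spec
    have hNa := hF 𝔞 h𝔞.1
    have hNc := hF 𝔠 h𝔠.1
    rw [hm, map_pow] at hNa
    rw [hk, ← hac, map_pow] at hNc
    have hne1 : absNorm 𝔞.radical ≠ 1 := fun h ↦ hprime.ne_top (absNorm_eq_one_iff.mp h)
    have hne0 : absNorm 𝔞.radical ≠ 0 := fun h ↦ by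
      exact h𝔞.2.radical_spec.2.1 (absNorm_eq_zero_iff.mp h)
    have hmk : m = k := Nat.pow_right_injective (by omega) (hNa.trans hNc.symm)
    rw [hm, hk, hac, hmk]
  rw [ArithmeticFunction.vonMangoldt_apply, if_pos hn,
    ← Finset.sum_image (f := fun 𝔭 : Ideal (𝓞 K) ↦ Real.log (absNorm 𝔭)) hinj]
  refine sum_log_absNorm_le (Nat.minFac_prime hn.ne_one) _ fun 𝔭 h𝔭 ↦ ?_
  obtain ⟨𝔞, h𝔞, rfl⟩ := Finset.mem_image.mp h𝔭
  rw [Finset.mem_filter] at h𝔞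
  obtain ⟨h1, h2, -, -, h5⟩ := h𝔞.2.radical_spec
  rw [hF 𝔞 h𝔞.1] at h5
  exact ⟨h1, h2, h5⟩

lemma psiKChi_eq_sum {x : ℝ} (hx : 0 ≤ x) {q : ℕ} (χ : DirichletCharacter ℂ q) :
    psiKChi K x χ = ∑ n ∈ Finset.range (⌊x⌋₊ + 1), (normCoeff K n : ℂ) * χ n := by
  set F := (finite_setOfPred_absNorm_le (S := 𝓞 K) ⌊x⌋₊).toFinset
  have hF : ∀ 𝔞, 𝔞 ∈ F ↔ (absNorm 𝔞 : ℝ) ≤ x := fun 𝔞 ↦ by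
    simp [F, Nat.le_floor_iff hx]
  rw [psiKChi, tsum_eq_sum (s := F) (fun 𝔞 h𝔞 ↦ if_neg (mt (hF 𝔞).mpr h𝔞))]
  have hmaps : ∀ 𝔞 ∈ F, absNorm 𝔞 ∈ Finset.range (⌊x⌋₊ + 1) := fun 𝔞 h𝔞 ↦ by
    rw [Finset.mem_range, Nat.lt_succ_iff, Nat.le_floor_iff hx]
    exact (hF 𝔞).mp h𝔞
  rw [← Finset.sum_fiberwise_of_maps_to hmaps]
  refine Finset.sum_congr rfl fun n hn ↦ ?_
  have hn' : (n : ℝ) ≤ x := by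
    rwa [Finset.mem_range, Nat.lt_succ_iff, Nat.le_floor_iff hx] at hn
  have hset : F.filter (fun 𝔞 ↦ absNorm 𝔞 = n) =
      (finite_setOfPred_absNorm_eq (S := 𝓞 K) n).toFinset := by
    ext 𝔞
    rw [Finset.mem_filter, hF, Set.Finite.mem_toFinset, Set.mem_ofPred_eq]
    exact ⟨fun h ↦ h.2, fun h ↦ ⟨h ▸ hn', h⟩⟩
  rw [hset, normCoeff]
  push_cast
  rw [Finset.sum_mul]
  refine Finset.sum_congr rfl fun 𝔞 h𝔞 ↦ ?_
  have h𝔞' : absNorm 𝔞 = n := by simpa using h𝔞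
  rw [h𝔞', if_pos hn', mul_comm]

lemma sum_sq_normCoeff_le {x : ℝ} (hx : 1 ≤ x) :
    ∑ n ∈ Finset.range (⌊x⌋₊ + 1), ‖(normCoeff K n : ℂ)‖ ^ 2 ≤
      (Module.finrank ℚ K) ^ 2 * (Real.log 4 + 4) * (x * Real.log x) := by
  have hx0 : 0 ≤ x := by linarith
  have hlog := Real.log_nonneg hx
  have hterm : ∀ n ∈ Finset.Ioc 0 ⌊x⌋₊, ‖(normCoeff K n : ℂ)‖ ^ 2 ≤
      (Module.finrank ℚ K) ^ 2 * Real.log x * ArithmeticFunction.vonMangoldt n := by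
    intro n hn
    rw [Finset.mem_Ioc] at hn
    have hΛ := ArithmeticFunction.vonMangoldt_nonneg (n := n)
    have hle : ArithmeticFunction.vonMangoldt n ≤ Real.log x :=
      ArithmeticFunction.vonMangoldt_le_log.trans
        (Real.log_le_log (by exact_mod_cast hn.1) ((Nat.le_floor_iff hx0).mp hn.2))
    rw [Complex.norm_real, Real.norm_of_nonneg (normCoeff_nonneg n)]
    calc normCoeff K n ^ 2 ≤ (Module.finrank ℚ K * ArithmeticFunction.vonMangoldt n) ^ 2 :=
          pow_le_pow_left₀ (normCoeff_nonneg n) (normCoeff_le n) 2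
      _ = (Module.finrank ℚ K) ^ 2 *
          (ArithmeticFunction.vonMangoldt n * ArithmeticFunction.vonMangoldt n) := by ring
      _ ≤ (Module.finrank ℚ K) ^ 2 * (Real.log x * ArithmeticFunction.vonMangoldt n) := by gcongr
      _ = _ := by ring
  have h0 : normCoeff K 0 = 0 := le_antisymm (by simpa using normCoeff_le (K := K) 0)
    (normCoeff_nonneg 0)
  have hrange : Finset.range (⌊x⌋₊ + 1) = insert 0 (Finset.Ioc 0 ⌊x⌋₊) := by
    ext n
    simp only [Finset.mem_range, Finset.mem_insert, Finset.mem_Ioc]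
    omega
  rw [hrange, Finset.sum_insert (by simp), h0]
  calc _ ≤ ∑ n ∈ Finset.Ioc 0 ⌊x⌋₊,
        (Module.finrank ℚ K) ^ 2 * Real.log x * ArithmeticFunction.vonMangoldt n := by
        simpa using Finset.sum_le_sum hterm
    _ = (Module.finrank ℚ K) ^ 2 * Real.log x * Chebyshev.psi x := by
        rw [← Finset.mul_sum]; rfl
    _ ≤ (Module.finrank ℚ K) ^ 2 * Real.log x * ((Real.log 4 + 4) * x) := by
        gcongr
        exact Chebyshev.psi_le_const_mul_self hx0
    _ = _ := by ring

end Coefficients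

section CyclotomicImage

variable (K : Type*) [Field K] [NumberField K]

lemma mem_Gq_iff {q : ℕ} [NeZero q] (u : (ZMod q)ˣ) :
    u ∈ Gq K q ↔ ∃ σ : CyclotomicField q K ≃ₐ[K] CyclotomicField q K,
      σ (IsCyclotomicExtension.zeta q K (CyclotomicField q K)) =
        IsCyclotomicExtension.zeta q K (CyclotomicField q K) ^ (u : ZMod q).val := by
  have hζ := IsCyclotomicExtension.zeta_spec q K (CyclotomicField q K)
  have h : Gq K q = (hζ.autToPow K).range := by
    rw [Gq, dif_pos (NeZero.pos q)]
  rw [h, MonoidHom.mem_range]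
  refine exists_congr fun σ ↦ ?_
  rw [← hζ.autToPow_spec K σ]
  constructor
  · rintro rfl
    rfl
  · intro h
    apply Units.ext
    apply ZMod.val_injective
    exact hζ.pow_inj (ZMod.val_lt _) (ZMod.val_lt _) h

lemma unitsMap_mem_Gq {q n : ℕ} [NeZero q] [NeZero n] (hqn : q ∣ n) {u : (ZMod n)ˣ}
    (hu : u ∈ Gq K n) : ZMod.unitsMap hqn u ∈ Gq K q := by
  obtain ⟨σ, hσ⟩ := (mem_Gq_iff K u).mp hu
  rw [mem_Gq_iff]
  set ζn := IsCyclotomicExtension.zeta n K (CyclotomicField n K)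
  set ζq := IsCyclotomicExtension.zeta q K (CyclotomicField q K)
  have hζn : IsPrimitiveRoot ζn n := IsCyclotomicExtension.zeta_spec n K (CyclotomicField n K)
  have hζq : IsPrimitiveRoot ζq q := IsCyclotomicExtension.zeta_spec q K (CyclotomicField q K)
  obtain ⟨m, rfl⟩ := hqn
  have hm : m ≠ 0 := fun h ↦ NeZero.ne (q * m) (by simp [h])
  have hsplit : (Polynomial.map (algebraMap K (CyclotomicField (q * m) K))
      (Polynomial.cyclotomic q K)).Splits := by
    have h1 : IsPrimitiveRoot (ζn ^ m) q := hζn.pow (NeZero.pos _) (mul_comm q m)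
    rw [Polynomial.map_cyclotomic]
    exact (Polynomial.X_pow_sub_one_splits h1).of_dvd
      (Polynomial.X_pow_sub_C_ne_zero (NeZero.pos q) 1)
      (Polynomial.cyclotomic.dvd_X_pow_sub_one q _)
  have := IsCyclotomicExtension.splitting_field_cyclotomic q K (CyclotomicField q K)
  let f : CyclotomicField q K →ₐ[K] CyclotomicField (q * m) K :=
    Polynomial.IsSplittingField.lift (CyclotomicField q K) (Polynomial.cyclotomic q K) hsplit
  let _ : Algebra (CyclotomicField q K) (CyclotomicField (q * m) K) := f.toRingHom.toAlgebra
  have : IsScalarTower K (CyclotomicField q K) (CyclotomicField (q * m) K) :=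
    IsScalarTower.of_algebraMap_eq fun x ↦ (f.commutes x).symm
  have : IsGalois K (CyclotomicField q K) := IsCyclotomicExtension.isGalois {q} K _
  refine ⟨σ.restrictNormal (CyclotomicField q K), f.toRingHom.injective ?_⟩
  have h1 : f (σ.restrictNormal (CyclotomicField q K) ζq) = σ (f ζq) :=
    σ.restrictNormal_commutes (CyclotomicField q K) ζq
  have h2 : (f ζq) ^ (q * m) = 1 := by rw [← map_pow, pow_mul, hζq.pow_eq_one, one_pow, map_one]
  obtain ⟨j, -, hj⟩ := hζn.eq_pow_of_pow_eq_one h2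
  have h3 : σ (f ζq) = (f ζq) ^ (u : ZMod (q * m)).val := by
    rw [← hj, map_pow, hσ, ← pow_mul, ← pow_mul]
    congr 1
    exact mul_comm _ _
  change f _ = f _
  rw [h1, h3, ← map_pow]
  congr 1
  have h4 : ((ZMod.unitsMap (Dvd.intro m rfl) u : (ZMod q)ˣ) : ZMod q) =
      ((u : ZMod (q * m)).val : ZMod q) := by
    rw [ZMod.unitsMap_val, ZMod.cast_eq_val]
  rw [h4, ZMod.val_natCast]
  nth_rewrite 1 [← Nat.mod_add_div (u : ZMod (q * m)).val q]
  rw [pow_add, pow_mul, hζq.pow_eq_one, one_pow, mul_one]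

lemma totient_le_finrank_mul_card_Gq {n : ℕ} [NeZero n] :
    n.totient ≤ Module.finrank ℚ K * Nat.card (Gq K n) := by
  have hζ := IsCyclotomicExtension.zeta_spec n K (CyclotomicField n K)
  have : IsGalois K (CyclotomicField n K) := IsCyclotomicExtension.isGalois {n} K _
  have : FiniteDimensional K (CyclotomicField n K) :=
    IsCyclotomicExtension.finiteDimensional {n} K _
  have h : Gq K n = (hζ.autToPow K).range := by
    rw [Gq, dif_pos (NeZero.pos n)]
  have hcard : Nat.card (Gq K n) = Module.finrank K (CyclotomicField n K) := by
    rw [h, ← IsGalois.card_aut_eq_finrank]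
    exact Nat.card_congr (MonoidHom.ofInjective (hζ.autToPow_injective K)).symm.toEquiv
  have : FiniteDimensional ℚ (CyclotomicField n K) := FiniteDimensional.trans ℚ K _
  rw [hcard, Module.finrank_mul_finrank, ← Polynomial.natDegree_cyclotomic n ℚ,
    Polynomial.cyclotomic_eq_minpoly_rat hζ (NeZero.pos n)]
  exact minpoly.natDegree_le _

lemma index_Gq_le {n : ℕ} [NeZero n] : (Gq K n).index ≤ Module.finrank ℚ K := by
  have h := totient_le_finrank_mul_card_Gq K (n := n)
  have h1 := (Gq K n).index_mul_card
  rw [Nat.card_eq_fintype_card (α := (ZMod n)ˣ), ZMod.card_units_eq_totient] at h1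
  rw [← h1] at h
  exact Nat.le_of_mul_le_mul_right h Nat.card_pos

lemma card_le_index_of_trivial {G : Type*} [CommGroup G] [Finite G] (H : Subgroup G)
    (s : Finset (G →* ℂˣ)) (hs : ∀ f ∈ s, ∀ a ∈ H, f a = 1) : s.card ≤ H.index := by
  let g : s → (G ⧸ H →* ℂ) := fun f ↦
    (Units.coeHom ℂ).comp (QuotientGroup.lift H f.1 (fun a ha ↦ hs f.1 f.2 a ha))
  have hg : Function.Injective g := by
    intro f f' hff
    apply Subtype.ext
    ext a
    have := DFunLike.congr_fun hff (a : G ⧸ H)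
    exact this
  have : Fintype (G ⧸ H) := Fintype.ofFinite _
  have hli := (linearIndependent_monoidHom (G ⧸ H) ℂ).comp g hg
  have := hli.fintype_card_le_finrank
  simpa [Subgroup.index, Nat.card_eq_fintype_card] using this

/-- Only finitely many moduli carry a primitive character which is trivial on `Gq`. -/
lemma finite_setOf_exists_isPrimitive_trivial :
    {q : ℕ | q ≠ 0 ∧ ∃ χ : DirichletCharacter ℂ q, χ.IsPrimitive ∧
      ∀ a ∈ Gq K q, χ (a : ZMod q) = 1}.Finite := by
  by_contra hinf
  obtain ⟨t, ht, htcard⟩ := Set.Infinite.exists_subset_card_eq hinf (Module.finrank ℚ K + 1)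
  have ht' : ∀ q ∈ t, q ≠ 0 := fun q hq ↦ (ht hq).1
  set n := ∏ q ∈ t, q with hn
  have : NeZero n := ⟨Finset.prod_ne_zero_iff.mpr ht'⟩
  have hdvd : ∀ q ∈ t, q ∣ n := fun q hq ↦ Finset.dvd_prod_of_mem _ hq
  choose χ hprim htriv using fun q : t ↦ (ht q.2).2
  let Φ : t → ((ZMod n)ˣ →* ℂˣ) := fun q ↦
    (DirichletCharacter.changeLevel (hdvd q q.2) (χ q)).toUnitHom
  have hΦ : Function.Injective Φ := by
    intro q q' h
    have h1 := DirichletCharacter.toUnitHom_inj _ _ |>.mp h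
    have h2 := congrArg DirichletCharacter.conductor h1
    rw [DirichletCharacter.conductor_changeLevel, DirichletCharacter.conductor_changeLevel,
      (hprim q), (hprim q')] at h2
    exact Subtype.ext h2
  have hle := card_le_index_of_trivial (Gq K n) (Finset.univ.image Φ) (by
    intro f hf a ha
    obtain ⟨q, -, rfl⟩ := Finset.mem_image.mp hf
    have : NeZero q.1 := ⟨ht' q q.2⟩
    apply Units.ext
    rw [MulChar.coe_toUnitHom, DirichletCharacter.changeLevel_eq_cast_of_dvd, Units.val_one]
    have h := htriv q _ (unitsMap_mem_Gq K (hdvd q q.2) ha)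
    rwa [ZMod.unitsMap_val] at h)
  rw [Finset.card_image_of_injective _ hΦ, Finset.card_univ, Fintype.card_coe, htcard] at hle
  have := index_Gq_le K (n := n)
  omega

end CyclotomicImage

section DyadicSummation

lemma sum_range_add_two_mul_two_pow (J : ℕ) :
    ∑ j ∈ Finset.range (J + 1), ((j : ℝ) + 2) * 2 ^ (j + 1) = (J + 1) * 2 ^ (J + 2) := by
  induction J with
  | zero => norm_num
  | succ J ih =>
    rw [Finset.sum_range_succ, ih]
    push_cast
    ring

lemma sum_range_add_two_div_two_pow_le (J : ℕ) :
    ∑ j ∈ Finset.range J, ((j : ℝ) + 2) * 2 / 2 ^ j ≤ 12 := by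
  have h : ∑ j ∈ Finset.range J, ((j : ℝ) + 2) * 2 / 2 ^ j = 12 - (4 * J + 12) / 2 ^ J := by
    induction J with
    | zero => norm_num
    | succ J ih =>
      rw [Finset.sum_range_succ, ih]
      push_cast
      field_simp
      ring
  rw [h]
  linarith [show (0 : ℝ) ≤ (4 * J + 12) / 2 ^ J by positivity]

lemma two_pow_log_floor_le {y : ℝ} (hy : 1 ≤ y) : (2 : ℝ) ^ Nat.log 2 ⌊y⌋₊ ≤ y := by
  have h1 : ⌊y⌋₊ ≠ 0 := (Nat.floor_pos.mpr hy).ne'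
  calc (2 : ℝ) ^ Nat.log 2 ⌊y⌋₊ ≤ (⌊y⌋₊ : ℝ) := mod_cast Nat.pow_log_le_self 2 h1
    _ ≤ y := Nat.floor_le (by linarith)

lemma lt_two_pow_succ_log_floor (y : ℝ) : y < (2 : ℝ) ^ (Nat.log 2 ⌊y⌋₊ + 1) := by
  have h := Nat.lt_pow_succ_log_self (b := 2) one_lt_two ⌊y⌋₊
  calc y < (⌊y⌋₊ : ℝ) + 1 := Nat.lt_floor_add_one y
    _ ≤ (2 : ℝ) ^ (Nat.log 2 ⌊y⌋₊ + 1) := mod_cast h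

/-- Dyadic summation: a quadratic bound for the partial sums of `T` bounds its sum over
`(R, Q]` against the weight `log (2 * Q / q) / q`. -/
lemma sum_log_div_mul_le {T : ℕ → ℝ} (hT : ∀ q, 0 ≤ T q) {B N Q R : ℝ} (hB : 0 ≤ B) (hN : 0 ≤ N)
    (hsum : ∀ U : ℕ, ∑ q ∈ Finset.Icc 1 U, T q ≤ B * (N + U ^ 2)) (hR : 1 ≤ R) (hRQ : R ≤ Q) :
    ∑ q ∈ Finset.Ioc ⌊R⌋₊ ⌊Q⌋₊, Real.log (2 * Q / q) / q * T q ≤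
      B * (4 * (Nat.log 2 ⌊Q / R⌋₊ + 1) * N / R + 12 * Q) := by
  have hR0 : 0 < R := by linarith
  have hQ0 : 0 < Q := by linarith
  set J := Nat.log 2 ⌊Q / R⌋₊ with hJ
  have hJpow : (2 : ℝ) ^ J ≤ Q / R := two_pow_log_floor_le ((one_le_div hR0).mpr hRQ)
  have hpoint : ∀ q ∈ Finset.Ioc ⌊R⌋₊ ⌊Q⌋₊, Real.log (2 * Q / q) / q * T q ≤
      ∑ j ∈ Finset.range (J + 1), ((j : ℝ) + 2) * 2 ^ (j + 1) / Q *
        (if q ≤ ⌊Q / 2 ^ j⌋₊ then T q else 0) := by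
    intro q hq
    rw [Finset.mem_Ioc] at hq
    have hRq : R < q := Nat.lt_of_floor_lt hq.1
    have hqQ : (q : ℝ) ≤ Q := (Nat.le_floor_iff hQ0.le).mp hq.2
    have hq0 : (0 : ℝ) < q := by linarith
    set j := Nat.log 2 ⌊Q / q⌋₊ with hj
    have h1 : (2 : ℝ) ^ j ≤ Q / q := two_pow_log_floor_le ((one_le_div hq0).mpr hqQ)
    have h2 : Q / q < (2 : ℝ) ^ (j + 1) := lt_two_pow_succ_log_floor _
    have hjJ : j ≤ J := Nat.log_mono_right (Nat.floor_le_floor (by gcongr))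
    have hqj : q ≤ ⌊Q / 2 ^ j⌋₊ := by
      rw [Nat.le_floor_iff (by positivity), le_div_iff₀ (by positivity), mul_comm]
      exact (le_div_iff₀ hq0).mp h1
    have hlog : Real.log (2 * Q / q) ≤ j + 2 := by
      have h3 : 2 * Q / q ≤ (2 : ℝ) ^ (j + 2) := by
        rw [mul_div_assoc, pow_succ, mul_comm]
        gcongr
      calc Real.log (2 * Q / q) ≤ Real.log ((2 : ℝ) ^ (j + 2)) :=
            Real.log_le_log (by positivity) h3
        _ = (j + 2) * Real.log 2 := by rw [Real.log_pow]; push_cast; ring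
        _ ≤ (j + 2) * 1 := by gcongr; linarith [Real.log_two_lt_d9]
        _ = j + 2 := mul_one _
    have hinv : (q : ℝ)⁻¹ ≤ 2 ^ (j + 1) / Q := by
      rw [inv_eq_one_div, div_le_div_iff₀ hq0 hQ0, one_mul]
      exact ((div_lt_iff₀ hq0).mp h2).le
    calc Real.log (2 * Q / q) / q * T q
        ≤ ((j : ℝ) + 2) * 2 ^ (j + 1) / Q * T q := by
          refine mul_le_mul_of_nonneg_right ?_ (hT q)
          rw [div_eq_mul_inv, mul_div_assoc ((j : ℝ) + 2)]
          exact mul_le_mul hlog hinv (by positivity) (by positivity)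
      _ = ((j : ℝ) + 2) * 2 ^ (j + 1) / Q * (if q ≤ ⌊Q / 2 ^ j⌋₊ then T q else 0) := by
          rw [if_pos hqj]
      _ ≤ _ := by
          refine Finset.single_le_sum (f := fun j : ℕ ↦ ((j : ℝ) + 2) * 2 ^ (j + 1) / Q *
            (if q ≤ ⌊Q / 2 ^ j⌋₊ then T q else 0)) (fun i _ ↦ ?_)
            (Finset.mem_range.mpr (by omega))
          have : 0 ≤ (if q ≤ ⌊Q / 2 ^ i⌋₊ then T q else 0) := by
            split_ifs
            exacts [hT q, le_rfl]
          positivity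
  have hinner : ∀ j : ℕ, ∑ q ∈ Finset.Ioc ⌊R⌋₊ ⌊Q⌋₊, (if q ≤ ⌊Q / 2 ^ j⌋₊ then T q else 0) ≤
      B * (N + (Q / 2 ^ j) ^ 2) := by
    intro j
    rw [← Finset.sum_filter]
    calc _ ≤ ∑ q ∈ Finset.Icc 1 ⌊Q / 2 ^ j⌋₊, T q := by
          refine Finset.sum_le_sum_of_subset_of_nonneg (fun q hq ↦ ?_) fun q _ _ ↦ hT q
          rw [Finset.mem_filter, Finset.mem_Ioc] at hq
          rw [Finset.mem_Icc]
          omega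
      _ ≤ B * (N + (⌊Q / 2 ^ j⌋₊ : ℝ) ^ 2) := hsum _
      _ ≤ B * (N + (Q / 2 ^ j) ^ 2) := by
          gcongr
          exact Nat.floor_le (by positivity)
  calc ∑ q ∈ Finset.Ioc ⌊R⌋₊ ⌊Q⌋₊, Real.log (2 * Q / q) / q * T q
      ≤ ∑ j ∈ Finset.range (J + 1), ((j : ℝ) + 2) * 2 ^ (j + 1) / Q *
          ∑ q ∈ Finset.Ioc ⌊R⌋₊ ⌊Q⌋₊, (if q ≤ ⌊Q / 2 ^ j⌋₊ then T q else 0) := by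
        simp_rw [Finset.mul_sum]
        rw [Finset.sum_comm]
        exact Finset.sum_le_sum hpoint
    _ ≤ ∑ j ∈ Finset.range (J + 1), ((j : ℝ) + 2) * 2 ^ (j + 1) / Q *
          (B * (N + (Q / 2 ^ j) ^ 2)) := by
        gcongr with j _
        exact hinner j
    _ = B * (N / Q * ∑ j ∈ Finset.range (J + 1), ((j : ℝ) + 2) * 2 ^ (j + 1) +
          Q * ∑ j ∈ Finset.range (J + 1), ((j : ℝ) + 2) * 2 / 2 ^ j) := by
        simp_rw [mul_add B, Finset.mul_sum, ← Finset.sum_add_distrib]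
        refine Finset.sum_congr rfl fun j _ ↦ ?_
        field_simp
        ring
    _ ≤ B * (N / Q * ((J + 1) * (4 * (Q / R))) + Q * 12) := by
        rw [sum_range_add_two_mul_two_pow]
        gcongr
        · rw [pow_add]
          linarith
        · exact sum_range_add_two_div_two_pow_le _
    _ = B * (4 * (J + 1) * N / R + 12 * Q) := by
        field_simp

end DyadicSummation

section LargeModuli

variable (K : Type*) [Field K] [NumberField K]

lemma norm_psiKChi'_sq_le (x : ℝ) {q : ℕ} (χ : DirichletCharacter ℂ q) :
    ‖psiKChi' K x χ‖ ^ 2 ≤ 2 * ‖psiKChi K x χ‖ ^ 2 +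
      if ∀ a ∈ Gq K q, χ (a : ZMod q) = 1 then 2 * x ^ 2 else 0 := by
  rw [psiKChi']
  split_ifs with h
  · have h1 : ‖psiKChi K x χ - x‖ ≤ ‖psiKChi K x χ‖ + |x| := by
      simpa using norm_sub_le (psiKChi K x χ) (x : ℂ)
    have h2 := pow_le_pow_left₀ (norm_nonneg _) h1 2
    nlinarith [sq_nonneg (‖psiKChi K x χ‖ - |x|), sq_abs x]
  · nlinarith [sq_nonneg ‖psiKChi K x χ‖]

lemma finsum_norm_psiKChi'_sq_le (x : ℝ) (q : ℕ) [NeZero q] :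
    ∑ᶠ χ ∈ {χ : DirichletCharacter ℂ q | χ.IsPrimitive}, ‖psiKChi' K x χ‖ ^ 2 ≤
      2 * ∑ᶠ χ ∈ {χ : DirichletCharacter ℂ q | χ.IsPrimitive}, ‖psiKChi K x χ‖ ^ 2 +
      if ∃ χ : DirichletCharacter ℂ q, χ.IsPrimitive ∧ ∀ a ∈ Gq K q, χ (a : ZMod q) = 1
        then 2 * x ^ 2 * q.totient else 0 := by
  have hsum (f : DirichletCharacter ℂ q → ℝ) :
      ∑ᶠ χ ∈ {χ : DirichletCharacter ℂ q | χ.IsPrimitive}, f χ =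
        ∑ χ : DirichletCharacter ℂ q with χ.IsPrimitive, f χ := by
    rw [← finsum_mem_finset_eq_sum]
    simp
  rw [hsum, hsum]
  refine (Finset.sum_le_sum fun χ _ ↦ norm_psiKChi'_sq_le K x χ).trans ?_
  rw [Finset.sum_add_distrib, ← Finset.mul_sum]
  gcongr
  split_ifs with h
  · calc _ ≤ ∑ χ : DirichletCharacter ℂ q with χ.IsPrimitive, 2 * x ^ 2 := by
          refine Finset.sum_le_sum fun χ _ ↦ ?_
          split_ifs
          · exact le_rfl
          · positivity
      _ ≤ ∑ χ : DirichletCharacter ℂ q, 2 * x ^ 2 :=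
          Finset.sum_le_sum_of_subset_of_nonneg (Finset.filter_subset _ _)
            fun _ _ _ ↦ by positivity
      _ = 2 * x ^ 2 * q.totient := by
          rw [Finset.sum_const, Finset.card_univ, ← Nat.card_eq_fintype_card,
            DirichletCharacter.card_eq_totient_of_hasEnoughRootsOfUnity, nsmul_eq_mul, mul_comm]
  · refine (Finset.sum_eq_zero fun χ hχ ↦ if_neg fun h1 ↦ h ⟨χ, ?_, h1⟩).le
    exact (Finset.mem_filter.mp hχ).2

/-- The large sieve bound for the partial sums of the mean squares of `psiKChi`. -/
lemma exists_sum_norm_psiKChi_sq_le :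
    ∃ C : ℝ, 0 < C ∧ ∀ x : ℝ, 1 ≤ x → ∀ U : ℕ,
      ∑ q ∈ Finset.Icc 1 U, (q / q.totient : ℝ) *
        ∑ᶠ χ ∈ {χ : DirichletCharacter ℂ q | χ.IsPrimitive}, ‖psiKChi K x χ‖ ^ 2 ≤
      C * (x * Real.log x) * (x + U ^ 2) := by
  obtain ⟨C, hC, h⟩ := exists_multiplicative_large_sieve
  have hd : (0 : ℝ) < Module.finrank ℚ K := mod_cast Module.finrank_pos
  have hlog4 : 0 < Real.log 4 := Real.log_pos (by norm_num)
  refine ⟨C * ((Module.finrank ℚ K) ^ 2 * (Real.log 4 + 4)), by positivity, fun x hx U ↦ ?_⟩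
  have hx0 : 0 ≤ x := by linarith
  have hxlog : 0 ≤ Real.log x := Real.log_nonneg hx
  simp_rw [psiKChi_eq_sum hx0]
  calc _ ≤ _ := h ⌊x⌋₊ U fun n ↦ (normCoeff K n : ℂ)
    _ ≤ C * (x + U ^ 2) *
        ((Module.finrank ℚ K) ^ 2 * (Real.log 4 + 4) * (x * Real.log x)) := by
      gcongr
      · exact Nat.floor_le hx0
      · exact sum_sq_normCoeff_le hx
    _ = _ := by ring

lemma one_le_log_of_mul_rpow_neg_le {x M : ℝ} (hx : 2 ≤ x) (hM : 0 < M)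
    (h : x * Real.log x ^ (-M) ≤ x) : 1 ≤ Real.log x := by
  by_contra! hlt
  have h1 := Real.one_lt_rpow_of_pos_of_lt_one_of_neg (Real.log_pos (by linarith)) hlt
    (neg_neg_of_pos hM)
  nlinarith

lemma log_floor_div_le {x Q R : ℝ} (hx : 1 ≤ Real.log x) (hR : 1 ≤ R) (hRQ : R ≤ Q)
    (hQx : Q ≤ x) : (Nat.log 2 ⌊Q / R⌋₊ : ℝ) + 1 ≤ 3 * Real.log x := by
  have hR0 : 0 < R := by linarith
  have h1 := two_pow_log_floor_le ((one_le_div hR0).mpr hRQ)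
  have h2 : Q / R ≤ x := (div_le_self (by linarith) hR).trans hQx
  have h3 := Real.log_le_log (by positivity) (h1.trans h2)
  rw [Real.log_pow] at h3
  have h4 : (Nat.log 2 ⌊Q / R⌋₊ : ℝ) * (1 / 2) ≤ Nat.log 2 ⌊Q / R⌋₊ * Real.log 2 := by
    gcongr
    linarith [Real.log_two_gt_d9]
  linarith

end LargeModuli

/-- **Large moduli.** For fixed `M > 0`, with `Q₁ = (log x)^{M+1}`: for all `x ≥ 2` and
`x (log x)^{-M} ≤ Q ≤ x`,
`∑_{Q₁ < q ≤ Q} (1/φ(q)) log(2Q/q) ∑_{χ primitive mod q} |ψ'_K(x, χ∘N)|² ≪ x Q log x`,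
the implied constant depending only on `K` and `M`. -/
theorem large_moduli_bound (K : Type*) [Field K] [NumberField K] [IsGalois ℚ K]
    (M : ℝ) (hM : 0 < M) :
    ∃ C : ℝ, 0 < C ∧ ∀ x Q : ℝ, 2 ≤ x → x * Real.log x ^ (-M) ≤ Q → Q ≤ x →
      ∑ q ∈ Finset.Ioc ⌊Real.log x ^ (M + 1)⌋₊ ⌊Q⌋₊,
          (1 / q.totient : ℝ) * Real.log (2 * Q / q) *
            ∑ᶠ χ ∈ {χ : DirichletCharacter ℂ q | χ.IsPrimitive}, ‖psiKChi' K x χ‖ ^ 2 ≤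
        C * (x * Q * Real.log x) := by
  obtain ⟨C, hC, hsieve⟩ := exists_sum_norm_psiKChi_sq_le K
  obtain ⟨q₀, hq₀⟩ := (finite_setOf_exists_isPrimitive_trivial K).bddAbove
  refine ⟨48 * C + 4 * q₀ ^ 2, by positivity, fun x Q hx hxQ hQx ↦ ?_⟩
  have hL := one_le_log_of_mul_rpow_neg_le hx hM (hxQ.trans hQx)
  set L := Real.log x with hLdef
  have hL0 : 0 < L := by linarith
  have hx0 : 0 < x := by linarith
  have hQ0 : 0 < Q := lt_of_lt_of_le (by positivity) hxQ
  set R := L ^ (M + 1) with hRdef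
  have hR : 1 ≤ R := Real.one_le_rpow hL (by linarith)
  have hR0 : 0 < R := by linarith
  have hRinv : x * L / R ≤ Q := by
    refine le_trans (le_of_eq ?_) hxQ
    rw [hRdef, Real.rpow_add_one hL0.ne', Real.rpow_neg hL0.le]
    field_simp
  rcases lt_or_ge Q R with hRQ | hRQ
  · rw [Finset.Ioc_eq_empty_of_le (Nat.floor_le_floor hRQ.le), Finset.sum_empty]
    positivity
  let T : ℕ → ℝ := fun q ↦ (q / q.totient : ℝ) *
    ∑ᶠ χ ∈ {χ : DirichletCharacter ℂ q | χ.IsPrimitive}, ‖psiKChi K x χ‖ ^ 2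
  have hT (q : ℕ) : 0 ≤ T q :=
    mul_nonneg (by positivity) (finsum_nonneg fun χ ↦ finsum_nonneg fun _ ↦ by positivity)
  have hdyadic := sum_log_div_mul_le hT (B := C * (x * L)) (by positivity) hx0.le
    (fun U ↦ hsieve x (by linarith) U) hR hRQ
  have hJ := log_floor_div_le hL hR hRQ hQx
  have hpoint : ∀ q ∈ Finset.Ioc ⌊R⌋₊ ⌊Q⌋₊, (1 / q.totient : ℝ) * Real.log (2 * Q / q) *
      ∑ᶠ χ ∈ {χ : DirichletCharacter ℂ q | χ.IsPrimitive}, ‖psiKChi' K x χ‖ ^ 2 ≤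
      2 * (Real.log (2 * Q / q) / q * T q) +
        if q ∈ Finset.range (q₀ + 1) then 4 * q₀ * (x ^ 2 * L / R) else 0 := by
    intro q hq
    rw [Finset.mem_Ioc] at hq
    have hRq : R < q := Nat.lt_of_floor_lt hq.1
    have hqQ : (q : ℝ) ≤ Q := (Nat.le_floor_iff hQ0.le).mp hq.2
    have hq0 : (0 : ℝ) < q := by linarith
    have hq1 : 0 < q := mod_cast hq0
    have : NeZero q := ⟨hq1.ne'⟩
    have hφ : (0 : ℝ) < q.totient := mod_cast Nat.totient_pos.mpr hq1
    have hlog0 : 0 ≤ Real.log (2 * Q / q) :=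
      Real.log_nonneg ((one_le_div hq0).mpr (by linarith))
    have hlog : Real.log (2 * Q / q) ≤ 2 * L := by
      have h1 : 2 * Q / q ≤ x ^ 2 := by
        rw [div_le_iff₀ hq0]
        nlinarith
      calc Real.log (2 * Q / q) ≤ Real.log (x ^ 2) := Real.log_le_log (by positivity) h1
        _ = 2 * L := by rw [Real.log_pow]; norm_num [hLdef]
    calc _ ≤ _ := mul_le_mul_of_nonneg_left (finsum_norm_psiKChi'_sq_le K x q) (by positivity)
      _ = 2 * (Real.log (2 * Q / q) / q * T q) + (1 / q.totient : ℝ) * Real.log (2 * Q / q) *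
          if ∃ χ : DirichletCharacter ℂ q, χ.IsPrimitive ∧ ∀ a ∈ Gq K q, χ (a : ZMod q) = 1
            then 2 * x ^ 2 * q.totient else 0 := by
          rw [mul_add]
          congr 1
          simp only [T]
          field_simp
      _ ≤ _ := by
          gcongr
          split_ifs with h1 h2 h2
          · have hqq₀ : (q : ℝ) ≤ q₀ := mod_cast Nat.lt_succ_iff.mp (Finset.mem_range.mp h2)
            have h3 : 1 ≤ q₀ / R := (one_le_div hR0).mpr (by linarith)
            calc (1 / q.totient : ℝ) * Real.log (2 * Q / q) * (2 * x ^ 2 * q.totient)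
                = Real.log (2 * Q / q) * (2 * x ^ 2) * 1 := by field_simp
              _ ≤ 2 * L * (2 * x ^ 2) * (q₀ / R) := by gcongr
              _ = 4 * q₀ * (x ^ 2 * L / R) := by ring
          · exact absurd (Finset.mem_range.mpr (Nat.lt_succ_iff.mpr (hq₀ ⟨hq1.ne', h1⟩))) h2
          · rw [mul_zero]
            positivity
          · rw [mul_zero]
  have hexc : ∑ q ∈ Finset.Ioc ⌊R⌋₊ ⌊Q⌋₊,
      (if q ∈ Finset.range (q₀ + 1) then 4 * q₀ * (x ^ 2 * L / R) else 0) ≤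
        q₀ * (4 * q₀ * (x * Q)) := by
    rw [← Finset.sum_filter, Finset.sum_const, nsmul_eq_mul]
    have hcard : {q ∈ Finset.Ioc ⌊R⌋₊ ⌊Q⌋₊ | q ∈ Finset.range (q₀ + 1)}.card ≤ q₀ := by
      calc _ ≤ (Finset.Icc 1 q₀).card := by
            refine Finset.card_le_card fun q hq ↦ ?_
            rw [Finset.mem_filter, Finset.mem_Ioc, Finset.mem_range] at hq
            rw [Finset.mem_Icc]
            omega
        _ = q₀ := by simp
    have h1 : x ^ 2 * L / R ≤ x * Q := by
      calc x ^ 2 * L / R = x * (x * L / R) := by ring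
        _ ≤ x * Q := by gcongr
    gcongr
  have hmain : C * (x * L) * (4 * (Nat.log 2 ⌊Q / R⌋₊ + 1) * x / R + 12 * Q) ≤
      C * (x * L) * (24 * Q) := by
    gcongr
    calc 4 * ((Nat.log 2 ⌊Q / R⌋₊ : ℝ) + 1) * x / R + 12 * Q
        ≤ 4 * (3 * L) * x / R + 12 * Q := by gcongr
      _ = 12 * (x * L / R) + 12 * Q := by ring
      _ ≤ 24 * Q := by linarith
  calc _ ≤ _ := Finset.sum_le_sum hpoint
    _ ≤ 2 * (C * (x * L) * (24 * Q)) + q₀ * (4 * q₀ * (x * Q)) := by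
      rw [Finset.sum_add_distrib, ← Finset.mul_sum]
      gcongr
      exact hdyadic.trans hmain
    _ ≤ 2 * (C * (x * L) * (24 * Q)) + q₀ * (4 * q₀ * (x * Q)) * L := by
      exact add_le_add_right (le_mul_of_one_le_right (by positivity) hL) _
    _ = (48 * C + 4 * q₀ ^ 2) * (x * Q * L) := by ring
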